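/- Let d ≥ 1 and k ≥ 2 be integers. There exists a constant C = C(k, d) such that for every 1 ≤ i < j ≤ k, every w ∈ (ℤ^d)^k with ‖w_i − w_j‖ = 1, every s ≥ 0, and every w̄ ∈ {δ^{i,j}w, δ^{j,i}w, σ^{i,j}w}, one has Σ_{y ∈ (ℤ^d)^k} |p_s^{rw}(w̄, y) − p_s^{rw}(w, y)| ≤ C / (√s + 1). -/

import Mathlib

open scoped Classical

noncomputable section

namespace SSEPPaper

/-- Configurations of `k` labelled particles on `ℤ^d`. -/
abbrev Conf (d k : ℕ) := Fin k → Fin d → ℤ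

/-- Euclidean norm of an integer vector in `ℤ^d`. -/
def vnorm {d : ℕ} (v : Fin d → ℤ) : ℝ := Real.sqrt (∑ j, ((v j : ℝ)) ^ 2)

/-- Euclidean norm on `(ℝ^d)^k` of an integer configuration. -/
def cnorm {d k : ℕ} (x : Conf d k) : ℝ := Real.sqrt (∑ i, ∑ j, ((x i j : ℝ)) ^ 2)

/-- The set `𝕊^k` of configurations with pairwise distinct particle positions. -/
def SSet (d k : ℕ) : Set (Conf d k) := {x | ∀ i j : Fin k, i ≠ j → x i ≠ x j}

/-- Swap of the coordinates `i` and `j` of a configuration, i.e. `σ^{i,j}x`. -/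
def cswap {d k : ℕ} (i j : Fin k) (x : Conf d k) : Conf d k := x ∘ Equiv.swap i j

/-- `δ^{i,j}w`: the configuration which agrees with `w` except that its `j`-th coordinate
is replaced by `w i`. -/
def cdelta {d k : ℕ} (i j : Fin k) (w : Conf d k) : Conf d k := Function.update w j (w i)

/-- Kronecker delta function at `y`. -/
def deltaFn {α : Type*} (y : α) : α → ℝ := fun x => if x = y then 1 else 0

/-- Generator of the labelled exclusion process, extended to all of `(ℤ^d)^k`. -/
def Lexc {d k : ℕ} (f : Conf d k → ℝ) : Conf d k → ℝ := fun x =>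
  (∑' y : Conf d k, if cnorm (y - x) = 1 ∧ y ∈ SSet d k then f y - f x else 0) +
    ∑ i : Fin k, ∑ j : Fin k,
      if i < j ∧ vnorm (x i - x j) = 1 ∧ x ∈ SSet d k then f (cswap i j x) - f x else 0

/-- Generator of `k` independent simple random walks on `ℤ^d`. -/
def Lrw {d k : ℕ} (f : Conf d k → ℝ) : Conf d k → ℝ := fun x =>
  ∑' z : Conf d k, if cnorm (z - x) = 1 then f z - f x else 0

/-- Generator (discrete Laplacian) of a single simple random walk on `ℤ^d`. -/
def Lap {d : ℕ} (f : (Fin d → ℤ) → ℝ) : (Fin d → ℤ) → ℝ := fun x =>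
  ∑' y : Fin d → ℤ, if vnorm (y - x) = 1 then f y - f x else 0

/-- Transition probabilities `p_t^ℓ(x,y) = (e^{tL^ℓ} δ_y)(x)` of the labelled exclusion
process, given by the exponential power series of the generator. -/
def ptl {d k : ℕ} (t : ℝ) (x y : Conf d k) : ℝ :=
  ∑' n : ℕ, t ^ n / n.factorial * ((Lexc (d := d) (k := k))^[n] (deltaFn y)) x

/-- Transition probabilities `p_t^{rw}(x,y) = (e^{tL^{rw}} δ_y)(x)` of `k` independent
simple random walks on `ℤ^d`. -/
def ptrw {d k : ℕ} (t : ℝ) (x y : Conf d k) : ℝ :=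
  ∑' n : ℕ, t ^ n / n.factorial * ((Lrw (d := d) (k := k))^[n] (deltaFn y)) x

/-- Transition probabilities `p_t(x,y) = (e^{tΔ} δ_y)(x)` of a single continuous-time
simple random walk on `ℤ^d`. -/
def pt1 {d : ℕ} (t : ℝ) (x y : Fin d → ℤ) : ℝ :=
  ∑' n : ℕ, t ^ n / n.factorial * ((Lap (d := d))^[n] (deltaFn y)) x

/-- The configuration `e₁₁ = ((1,0,…,0),(0,…,0),…,(0,…,0))`. -/
def e11 (d k : ℕ) : Conf d k := fun i j => if i.val = 0 ∧ j.val = 0 then 1 else 0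

section Abstract

lemma _root_.HasSum.congr_fun' {E : Type*} [AddCommMonoid E] [TopologicalSpace E] {f g : ℕ → E}
    {a : E} (h : HasSum f a) (e : ∀ n, g n = f n) : HasSum g a := by
  rwa [show g = f from funext e]

lemma poisson0 (s : ℝ) : HasSum (fun n : ℕ => s ^ n / n.factorial) (Real.exp s) := by
  rw [Real.exp_eq_exp_ℝ]
  exact NormedSpace.expSeries_div_hasSum_exp s

lemma poisson1 (s : ℝ) : HasSum (fun n : ℕ => s ^ n / n.factorial * n) (s * Real.exp s) := by
  rw [← hasSum_nat_add_iff' 1]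
  have h := (poisson0 s).mul_left s
  simp only [Finset.range_one, Finset.sum_singleton, Nat.cast_zero, mul_zero, sub_zero]
  refine h.congr_fun' fun n => ?_
  rw [Nat.factorial_succ]
  have : (n.factorial : ℝ) ≠ 0 := by positivity
  push_cast
  field_simp
  ring

lemma poisson2 (s : ℝ) : HasSum (fun n : ℕ => s ^ n / n.factorial * n * n)
    (s * (s * Real.exp s + Real.exp s)) := by
  rw [← hasSum_nat_add_iff' 1]
  have h := ((poisson1 s).add (poisson0 s)).mul_left s
  simp only [Finset.range_one, Finset.sum_singleton, Nat.cast_zero, mul_zero, sub_zero]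
  refine h.congr_fun' fun n => ?_
  rw [Nat.factorial_succ]
  have : (n.factorial : ℝ) ≠ 0 := by positivity
  push_cast
  field_simp
  ring

lemma poisson_var (s : ℝ) (hs : 0 < s) :
    HasSum (fun n : ℕ => s ^ n / n.factorial * (n / s - 1) ^ 2) (Real.exp s / s) := by
  have h := (((poisson2 s).mul_left (1 / s ^ 2)).sub ((poisson1 s).mul_left (2 / s))).add
    (poisson0 s)
  have e : 1 / s ^ 2 * (s * (s * Real.exp s + Real.exp s)) - 2 / s * (s * Real.exp s) +
      Real.exp s = Real.exp s / s := by
    field_simp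
    ring
  rw [e] at h
  refine h.congr_fun' fun n => ?_
  have : (n.factorial : ℝ) ≠ 0 := by positivity
  field_simp
  ring

variable {A : Type*} [NormedRing A] [NormedAlgebra ℝ A] [CompleteSpace A] [NormOneClass A]

lemma hasSum_expA (s : ℝ) (X : A) :
    HasSum (fun n : ℕ => (s ^ n / n.factorial) • X ^ n) (NormedSpace.exp (s • X)) := by
  have h := NormedSpace.exp_series_hasSum_exp' (𝕂 := ℝ) (s • X)
  refine h.congr_fun' fun n => ?_
  rw [smul_pow, smul_smul]
  congr 1
  rw [div_eq_inv_mul]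

lemma norm_exp_leA (s c : ℝ) (hs : 0 ≤ s) (X : A) (hX : ‖X‖ ≤ c) :
    ‖NormedSpace.exp (s • X)‖ ≤ Real.exp (s * c) := by
  refine (hasSum_expA s X).norm_le_of_bounded (poisson0 (s * c)) fun n => ?_
  rw [norm_smul, mul_pow, mul_div_right_comm, Real.norm_of_nonneg (by positivity)]
  gcongr
  exact (norm_pow_le X n).trans (by gcongr)

lemma key_poisson (s : ℝ) (hs : 0 < s) (T : A) (hT : ‖T‖ ≤ 1) :
    ‖(T - 1) * NormedSpace.exp (s • T)‖ ≤ Real.exp s / √s := by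
  have h0 := hasSum_expA s T
  have h1 : HasSum (fun n : ℕ => (s ^ n / n.factorial * (n / s)) • T ^ n)
      (T * NormedSpace.exp (s • T)) := by
    rw [← hasSum_nat_add_iff' 1]
    simp only [Finset.range_one, Finset.sum_singleton, Nat.cast_zero, mul_zero, zero_smul,
      sub_zero, zero_div]
    refine (h0.mul_left T).congr_fun' fun n => ?_
    rw [mul_smul_comm, ← pow_succ']
    congr 1
    rw [Nat.factorial_succ]
    have : (n.factorial : ℝ) ≠ 0 := by positivity
    push_cast
    field_simp
    ring
  have h2 := h1.sub h0
  rw [sub_mul, one_mul]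
  have hq : 0 < √s := Real.sqrt_pos.mpr hs
  have hqq : √s * √s = s := Real.mul_self_sqrt hs.le
  have h3 := ((((poisson_var s hs).mul_left (√s)).add ((poisson0 s).mul_left (1 / √s)))).mul_left
    (1 / 2)
  have e : 1 / 2 * (√s * (Real.exp s / s) + 1 / √s * Real.exp s) = Real.exp s / √s := by
    have : √s * (Real.exp s / s) = Real.exp s / √s := by
      rw [mul_div_assoc', div_eq_div_iff hs.ne' hq.ne']
      linear_combination Real.exp s * hqq
    rw [this]
    ring
  rw [e] at h3
  refine h2.norm_le_of_bounded h3 fun n => ?_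
  rw [← sub_smul, norm_smul]
  have hp : ‖T ^ n‖ ≤ 1 := (norm_pow_le T n).trans (pow_le_one₀ (norm_nonneg _) hT)
  have ha : 0 ≤ s ^ n / n.factorial := by positivity
  set a := s ^ n / n.factorial
  have : a * (n / s) - a = a * (n / s - 1) := by ring
  rw [this, norm_mul, Real.norm_of_nonneg ha, Real.norm_eq_abs]
  set x := (n : ℝ) / s - 1
  have hx : |x| ≤ 1 / 2 * (√s * x ^ 2 + 1 / √s) := by
    have : 1 / 2 * (√s * x ^ 2 + 1 / √s) - |x| = 1 / 2 / √s * (√s * |x| - 1) ^ 2 := by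
      rw [← sq_abs x]
      field_simp
      ring
    have h5 : 0 ≤ 1 / 2 / √s * (√s * |x| - 1) ^ 2 := by positivity
    linarith
  calc a * |x| * ‖T ^ n‖ ≤ a * |x| * 1 := by gcongr
    _ ≤ a * (1 / 2 * (√s * x ^ 2 + 1 / √s)) * 1 := by gcongr
    _ = _ := by ring

lemma key_abs (s c : ℝ) (hs : 0 ≤ s) (T B : A) (hT : ‖T‖ ≤ 1) (hB : ‖B‖ ≤ c)
    (hc : Commute T B) :
    ‖(T - 1) * NormedSpace.exp (s • ((T - 1) + (B - c • 1)))‖ ≤ 3 / (√s + 1) := by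
  letI : NormedAlgebra ℚ A := NormedAlgebra.restrictScalars ℚ ℝ A
  have e1 : s • ((T - 1) + (B - c • (1 : A))) =
      algebraMap ℝ A (-(s * (1 + c))) + (s • T + s • B) := by
    rw [Algebra.algebraMap_eq_smul_one]
    module
  have e2 : NormedSpace.exp (s • ((T - 1) + (B - c • (1 : A)))) =
      Real.exp (-(s * (1 + c))) • (NormedSpace.exp (s • T) * NormedSpace.exp (s • B)) := by
    rw [e1, NormedSpace.exp_add_of_commute (Algebra.commutes _ _),
      NormedSpace.exp_add_of_commute ((hc.smul_left s).smul_right s),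
      ← NormedSpace.algebraMap_exp_comm, ← Algebra.smul_def, ← Real.exp_eq_exp_ℝ]
  have hT1 : ‖T - 1‖ ≤ 2 := (norm_sub_le _ _).trans (by rw [norm_one]; linarith)
  have eE : Real.exp (-(s * (1 + c))) * (Real.exp s * Real.exp (s * c)) = 1 := by
    rw [← Real.exp_add, ← Real.exp_add, Real.exp_eq_one_iff]
    ring
  have main : ∀ D : ℝ, ‖(T - 1) * NormedSpace.exp (s • T)‖ ≤ Real.exp s * D →
      ‖(T - 1) * NormedSpace.exp (s • ((T - 1) + (B - c • 1)))‖ ≤ D := by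
    intro D hD
    rw [e2, mul_smul_comm, ← mul_assoc, norm_smul, Real.norm_of_nonneg (Real.exp_pos _).le]
    calc _ ≤ Real.exp (-(s * (1 + c))) * (‖(T - 1) * NormedSpace.exp (s • T)‖ *
            ‖NormedSpace.exp (s • B)‖) := by gcongr; exact norm_mul_le _ _
      _ ≤ Real.exp (-(s * (1 + c))) * ((Real.exp s * D) * Real.exp (s * c)) := by
          have := norm_exp_leA s c hs B hB
          have h0 := (norm_nonneg _).trans hD
          gcongr
      _ = (Real.exp (-(s * (1 + c))) * (Real.exp s * Real.exp (s * c))) * D := by ring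
      _ = D := by rw [eE, one_mul]
  rcases le_total (√s) (1 / 2) with h | h
  · refine (main 2 ?_).trans ?_
    · have := norm_exp_leA s 1 hs T hT
      rw [mul_one] at this
      calc _ ≤ ‖T - 1‖ * ‖NormedSpace.exp (s • T)‖ := norm_mul_le _ _
        _ ≤ 2 * Real.exp s := by gcongr
        _ = _ := by ring
    · rw [le_div_iff₀ (by positivity)]
      linarith
  · have hq : 0 < √s := by linarith
    refine (main (1 / √s) ?_).trans ?_
    · rw [mul_one_div]
      exact key_poisson s (Real.sqrt_pos.mp hq) T hT
    · rw [div_le_div_iff₀ hq (by positivity)]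
      linarith

end Abstract

section Concrete

variable {d k : ℕ}

/-- Bounded functions on configurations. -/
def BF (d k : ℕ) : Type := BoundedContinuousFunction (Conf d k) ℝ

instance : NormedAddCommGroup (BF d k) :=
  inferInstanceAs (NormedAddCommGroup (BoundedContinuousFunction (Conf d k) ℝ))

instance : NormedSpace ℝ (BF d k) :=
  inferInstanceAs (NormedSpace ℝ (BoundedContinuousFunction (Conf d k) ℝ))

instance : CompleteSpace (BF d k) :=
  inferInstanceAs (CompleteSpace (BoundedContinuousFunction (Conf d k) ℝ))

instance : Nontrivial (BF d k) := by
  refine ⟨(BoundedContinuousFunction.const (Conf d k) (0 : ℝ)),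
    (BoundedContinuousFunction.const (Conf d k) (1 : ℝ)), fun h => ?_⟩
  have := congrArg (fun f : BoundedContinuousFunction (Conf d k) ℝ => f 0) h
  simp at this

/-- Underlying function. -/
def BF.fn (f : BF d k) : Conf d k → ℝ :=
  fun x => (show BoundedContinuousFunction (Conf d k) ℝ from f) x

instance : CoeFun (BF d k) (fun _ => Conf d k → ℝ) := ⟨BF.fn⟩

lemma BF.ext {f g : BF d k} (h : ∀ x, f x = g x) : f = g :=
  BoundedContinuousFunction.ext h

lemma BF.norm_le {f : BF d k} {C : ℝ} (hC : 0 ≤ C) : ‖f‖ ≤ C ↔ ∀ x, |f x| ≤ C :=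
  BoundedContinuousFunction.norm_le (f := (show BoundedContinuousFunction (Conf d k) ℝ from f)) hC

lemma BF.abs_le (f : BF d k) (x : Conf d k) : |f x| ≤ ‖f‖ :=
  (BF.norm_le (norm_nonneg _)).1 le_rfl x

/-- Evaluation functional. -/
def ev (x : Conf d k) : BF d k →L[ℝ] ℝ :=
  LinearMap.mkContinuous
    { toFun := fun f => f x
      map_add' := fun f g => rfl
      map_smul' := fun c f => rfl } 1 (fun f => by
      rw [one_mul]
      exact f.abs_le x)

lemma ev_apply (x : Conf d k) (f : BF d k) : ev x f = f x := rfl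

lemma BF.sum_apply {ι : Type*} (F : Finset ι) (f : ι → BF d k) (x : Conf d k) :
    (∑ y ∈ F, f y : BF d k) x = ∑ y ∈ F, f y x := by
  simp only [← ev_apply, map_sum]

/-- A bounded function. -/
def BF.mk (f : Conf d k → ℝ) (C : ℝ) (h : ∀ x, |f x| ≤ C) : BF d k :=
  BoundedContinuousFunction.ofNormedAddCommGroupDiscrete f C h

/-- Translation operator. -/
def Tr (u : Conf d k) : BF d k →L[ℝ] BF d k :=
  LinearMap.mkContinuous
    { toFun := fun f => BF.mk (fun x => f (x + u)) ‖f‖ (fun x => f.abs_le _)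
      map_add' := fun f g => rfl
      map_smul' := fun c f => rfl } 1 (fun f => by
      rw [one_mul, BF.norm_le (norm_nonneg _)]
      intro x
      exact f.abs_le _)

lemma Tr_apply (u : Conf d k) (f : BF d k) (x : Conf d k) : Tr u f x = f (x + u) := rfl

lemma Tr_norm (u : Conf d k) : ‖Tr u‖ ≤ 1 :=
  LinearMap.mkContinuous_norm_le _ zero_le_one _

lemma Tr_comm (u v : Conf d k) : Commute (Tr u) (Tr v) := by
  refine ContinuousLinearMap.ext fun f => BF.ext fun x => ?_
  change f (x + u + v) = f (x + v + u)
  rw [add_right_comm]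

lemma units_finite (d k : ℕ) : {u : Conf d k | cnorm u = 1}.Finite := by
  refine (Set.finite_Icc (-1 : Conf d k) 1).subset ?_
  intro u hu
  simp only [Set.mem_ofPred_eq, cnorm, Real.sqrt_eq_one] at hu
  have h : ∀ i j, (u i j) ^ 2 ≤ 1 := by
    intro i j
    have h1 : ((u i j : ℝ)) ^ 2 ≤ 1 := by
      rw [← hu]
      calc ((u i j : ℝ)) ^ 2 ≤ ∑ j, ((u i j : ℝ)) ^ 2 :=
            Finset.single_le_sum (f := fun j => ((u i j : ℝ)) ^ 2)
              (fun _ _ => sq_nonneg _) (Finset.mem_univ j)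
        _ ≤ _ := Finset.single_le_sum (f := fun i => ∑ j, ((u i j : ℝ)) ^ 2)
              (fun _ _ => Finset.sum_nonneg fun _ _ => sq_nonneg _) (Finset.mem_univ i)
    exact_mod_cast h1
  constructor
  · intro i j
    have := abs_le.mp ((sq_le_one_iff_abs_le_one _).mp (h i j))
    exact this.1
  · intro i j
    have := abs_le.mp ((sq_le_one_iff_abs_le_one _).mp (h i j))
    exact this.2

/-- The unit vectors. -/
def U (d k : ℕ) : Finset (Conf d k) := (units_finite d k).toFinset

lemma mem_U (u : Conf d k) : u ∈ U d k ↔ cnorm u = 1 := by simp [U]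

/-- The generator as a bounded operator. -/
def LL (d k : ℕ) : BF d k →L[ℝ] BF d k := ∑ u ∈ U d k, (Tr u - 1)

lemma LL_apply (f : BF d k) : Lrw (f : Conf d k → ℝ) = LL d k f := by
  funext x
  unfold Lrw
  rw [← (Equiv.addLeft x).tsum_eq]
  rw [tsum_eq_sum (s := U d k)]
  · have : (LL d k f) x = ∑ u ∈ U d k, (f (x + u) - f x) := by
      rw [LL, _root_.sum_apply, BF.sum_apply]
      rfl
    rw [this]
    refine Finset.sum_congr rfl fun u hu => ?_
    rw [mem_U] at hu
    simp [hu]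
  · intro u hu
    rw [mem_U] at hu
    simp [hu]

/-- Kronecker delta as a bounded function. -/
def dl (y : Conf d k) : BF d k :=
  BF.mk (deltaFn y) 1 (fun x => by
    unfold deltaFn
    split_ifs <;> simp)

lemma iter_LL (n : ℕ) (f : BF d k) :
    (Lrw (d := d) (k := k))^[n] (f : Conf d k → ℝ) = ((LL d k) ^ n) f := by
  induction n with
  | zero => rfl
  | succ n ih =>
    rw [Function.iterate_succ_apply', ih, LL_apply, pow_succ']
    rfl

/-- The semigroup. -/
def PP (d k : ℕ) (s : ℝ) : BF d k →L[ℝ] BF d k := NormedSpace.exp (s • LL d k)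

lemma ptrw_eq (s : ℝ) (x y : Conf d k) : ptrw s x y = PP d k s (dl y) x := by
  have h := hasSum_expA s (LL d k)
  have h1 := (ContinuousLinearMap.apply ℝ (BF d k) (dl y)).hasSum h
  have h2 := (ev x).hasSum h1
  unfold ptrw
  refine Eq.trans ?_ h2.tsum_eq
  refine tsum_congr fun n => ?_
  have := congrFun (iter_LL n (dl y)) x
  have h3 : ((dl y : BF d k) : Conf d k → ℝ) = deltaFn y := rfl
  rw [h3] at this
  rw [this]
  rfl

lemma step (s : ℝ) (hs : 0 ≤ s) (v : Conf d k) (hv : cnorm v = 1) (w : Conf d k) (f : BF d k)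
    (hf : ‖f‖ ≤ 1) : |PP d k s f (w + v) - PP d k s f w| ≤ 3 / (√s + 1) := by
  have hL : LL d k = (Tr v - 1) + (∑ u ∈ (U d k).erase v, Tr u -
      (((U d k).erase v).card : ℝ) • (1 : BF d k →L[ℝ] BF d k)) := by
    rw [LL, ← Finset.add_sum_erase _ _ ((mem_U v).2 hv), Finset.sum_sub_distrib]
    simp [Nat.cast_smul_eq_nsmul]
  have h := key_abs s (((U d k).erase v).card : ℝ) hs (Tr v) (∑ u ∈ (U d k).erase v, Tr u)
    (Tr_norm v) ((norm_sum_le _ _).trans (by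
      calc _ ≤ ∑ u ∈ (U d k).erase v, (1 : ℝ) := Finset.sum_le_sum fun u _ => Tr_norm u
        _ = _ := by simp))
    (Commute.sum_right _ _ _ fun u _ => Tr_comm v u)
  rw [← hL] at h
  have e : PP d k s f (w + v) - PP d k s f w =
    ((Tr v - 1) * NormedSpace.exp (s • LL d k)) f w := rfl
  rw [e, ← Real.norm_eq_abs]
  calc _ ≤ ‖((Tr v - 1) * NormedSpace.exp (s • LL d k)) f‖ :=
        BF.abs_le _ _
    _ ≤ _ := ContinuousLinearMap.le_opNorm _ _
    _ ≤ 3 / (√s + 1) * 1 := by gcongr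
    _ = _ := mul_one _

lemma finish (s : ℝ) (x w : Conf d k) (D : ℝ)
    (h : ∀ f : BF d k, ‖f‖ ≤ 1 → |PP d k s f x - PP d k s f w| ≤ D) :
    Summable (fun y : Conf d k => |ptrw s x y - ptrw s w y|) ∧
      ∑' y : Conf d k, |ptrw s x y - ptrw s w y| ≤ D := by
  have hb : ∀ F : Finset (Conf d k), ∑ y ∈ F, |ptrw s x y - ptrw s w y| ≤ D := by
    intro F
    set ε : Conf d k → ℝ := fun y => SignType.sign (ptrw s x y - ptrw s w y) with hε
    have hε1 : ∀ y, |ε y| ≤ 1 := by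
      intro y
      rcases lt_trichotomy (ptrw s x y - ptrw s w y) 0 with h | h | h <;> simp [hε, h]
    set f : BF d k := ∑ y ∈ F, ε y • dl y with hf
    have hfn : ‖f‖ ≤ 1 := by
      rw [BF.norm_le zero_le_one]
      intro z
      have : f z = if z ∈ F then ε z else 0 := by
        rw [hf, BF.sum_apply]
        change ∑ y ∈ F, ε y * deltaFn y z = _
        simp [deltaFn]
      rw [this]
      split_ifs
      · exact hε1 z
      · simp
    have e : PP d k s f x - PP d k s f w = ∑ y ∈ F, |ptrw s x y - ptrw s w y| := by
      rw [hf, map_sum, BF.sum_apply, BF.sum_apply,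
        ← Finset.sum_sub_distrib]
      refine Finset.sum_congr rfl fun y _ => ?_
      rw [map_smul]
      change ε y * PP d k s (dl y) x - ε y * PP d k s (dl y) w = _
      rw [← ptrw_eq, ← ptrw_eq, ← mul_sub]
      exact sign_mul_self _
    rw [← e]
    exact (le_abs_self _).trans (h f hfn)
  exact ⟨summable_of_sum_le (fun _ => abs_nonneg _) hb,
    Real.tsum_le_of_sum_le (fun _ => abs_nonneg _) hb⟩

lemma cnorm_single (j : Fin k) (v : Fin d → ℤ) : cnorm (Pi.single j v : Conf d k) = vnorm v := by
  unfold cnorm vnorm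
  congr 1
  rw [Finset.sum_eq_single j]
  · simp
  · intro b _ hb
    simp [Pi.single_eq_of_ne hb]
  · simp

lemma vnorm_sub_comm (a b : Fin d → ℤ) : vnorm (a - b) = vnorm (b - a) := by
  unfold vnorm
  congr 1
  refine Finset.sum_congr rfl fun i _ => ?_
  simp only [Pi.sub_apply]
  push_cast
  ring

lemma update_eq (w : Conf d k) (j : Fin k) (a : Fin d → ℤ) :
    Function.update w j a = w + Pi.single j (a - w j) := by
  funext l
  by_cases h : l = j
  · subst h
    simp
  · simp [h]

end Concrete

/-- Total variation bound for one-step perturbations of independent random walks: for integers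
`d ≥ 1`, `k ≥ 2` there is a constant `C = C(k,d)` such that for every `1 ≤ i < j ≤ k`, every
`w ∈ (ℤ^d)^k` with `‖w_i − w_j‖ = 1`, every `s ≥ 0` and every
`w̄ ∈ {δ^{i,j}w, δ^{j,i}w, σ^{i,j}w}`,
`Σ_{y ∈ (ℤ^d)^k} |p_s^{rw}(w̄,y) − p_s^{rw}(w,y)| ≤ C/(√s+1)`. -/
theorem rw_one_step_total_variation (d k : ℕ) (hd : 1 ≤ d) (hk : 2 ≤ k) :
    ∃ C : ℝ, 0 < C ∧ ∀ i j : Fin k, i < j → ∀ w : Conf d k, vnorm (w i - w j) = 1 →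
      ∀ s : ℝ, 0 ≤ s → ∀ wb : Conf d k,
        (wb = cdelta i j w ∨ wb = cdelta j i w ∨ wb = cswap i j w) →
        Summable (fun y : Conf d k => |ptrw s wb y - ptrw s w y|) ∧
        ∑' y : Conf d k, |ptrw s wb y - ptrw s w y| ≤ C / (Real.sqrt s + 1) := by
  have hupd : ∀ (s : ℝ), 0 ≤ s → ∀ (w : Conf d k) (j : Fin k) (a : Fin d → ℤ),
      vnorm (a - w j) = 1 → ∀ f : BF d k, ‖f‖ ≤ 1 →
      |PP d k s f (Function.update w j a) - PP d k s f w| ≤ 3 / (√s + 1) := by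
    intro s hs w j a ha f hf
    rw [update_eq]
    exact step s hs _ (by rw [cnorm_single, ha]) w f hf
  refine ⟨6, by norm_num, ?_⟩
  intro i j hij w hw s hs wb hwb
  apply finish
  intro f hf
  have h36 : 3 / (√s + 1) + 3 / (√s + 1) = 6 / (√s + 1) := by ring
  have hpos : 0 ≤ 3 / (√s + 1) := by positivity
  rcases hwb with rfl | rfl | rfl
  · have := hupd s hs w j (w i) hw f hf
    unfold cdelta
    linarith
  · have := hupd s hs w i (w j) (by rw [vnorm_sub_comm, hw]) f hf
    unfold cdelta
    linarith
  · have h1 := hupd s hs w j (w i) hw f hf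
    have h2 := hupd s hs (Function.update w j (w i)) i (w j)
      (by rw [Function.update_of_ne hij.ne, vnorm_sub_comm, hw]) f hf
    have e : cswap i j w = Function.update (Function.update w j (w i)) i (w j) := by
      funext l
      unfold cswap
      by_cases hi : l = i
      · subst hi; simp
      · by_cases hj : l = j
        · subst hj; simp [hi]
        · simp [hi, hj, Equiv.swap_apply_of_ne_of_ne hi hj]
    rw [e]
    exact (abs_sub_le _ _ _).trans (by linarith)

end SSEPPaper
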